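/- Let p be a prime with p > h. Suppose w·0 + pσ = w'·0 + pσ', where w, w' ∈ W and σ, σ' are dominant weights each satisfying (σ, α₀∨) ≤ 1 and (σ', α₀∨) ≤ 1 (i.e., each is zero or minuscule). Then w = w' and σ = σ'. In other words, a weight λ ∈ X⁺ ∩ C̄_ℤ that is weakly p-linked to 0 uniquely determines the pair (w, σ) with λ = w·0 + pσ. -/

import Mathlib

/-!
Put `τ = σ' - σ`, a weight with `p τ = w ρ - w' ρ`.

The operator `x ↦ ∑_{β ∈ Φ} ⟨x, β∨⟩ β` commutes with the Weyl group, so by Schur's lemma it is a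
scalar; evaluation at `α₀` shows that the scalar is `2h`.  Since `2 w ρ` is a sum of roots, one from
each pair `±β`, we have `(w ρ, τ) ≤ ¼ ∑_β |(β, τ)|`.  As `⟨τ, β∨⟩` is an integer,
`|(β, τ)| ≤ ⟨τ, β∨⟩ (β, τ)`.  Hence
`p (τ, τ) = (w ρ, τ) - (w' ρ, τ) ≤ ½ ∑_β ⟨τ, β∨⟩ (β, τ) = h (τ, τ)`,
and `p > h` forces `τ = 0`.  Now `w'⁻¹ w` fixes the strictly dominant vector `ρ`, so it permutes the
positive roots, and the exchange property shows that it is trivial.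
-/

open scoped RealInnerProductSpace

namespace PaperDNN

variable {E : Type*} [NormedAddCommGroup E] [InnerProductSpace ℝ E]

/-- The coroot pairing `⟨x, α∨⟩ = 2⟪x,α⟫/⟪α,α⟫`. -/
noncomputable def pair (x a : E) : ℝ := 2 * ⟪x, a⟫ / ⟪a, a⟫

/-- `Φ` is a reduced irreducible root system in the Euclidean space `E`. -/
structure IsRootSystem (Φ : Finset E) : Prop where
  nonempty : Φ.Nonempty
  ne_zero : ∀ α ∈ Φ, α ≠ 0
  span_top : Submodule.span ℝ (Φ : Set E) = ⊤
  reduced : ∀ α ∈ Φ, ∀ t : ℝ, t • α ∈ Φ → t = 1 ∨ t = -1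
  reflect_mem : ∀ α ∈ Φ, ∀ β ∈ Φ, β - pair β α • α ∈ Φ
  pair_int : ∀ α ∈ Φ, ∀ β ∈ Φ, ∃ n : ℤ, pair β α = (n : ℝ)
  irred : ∀ S T : Set E, S ∪ T = (Φ : Set E) → S.Nonempty → T.Nonempty →
      (∀ a ∈ S, ∀ b ∈ T, ⟪a, b⟫ = 0) → False

/-- `Δ` is a base of simple roots for `Φ`: every root is a nonnegative or
nonpositive integral combination of the simple roots. -/
structure IsBase (Φ Δ : Finset E) : Prop where
  subset : Δ ⊆ Φ
  indep : LinearIndependent ℝ (fun a : {x // x ∈ Δ} => (a : E))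
  root_decomp : ∀ β ∈ Φ, (∃ c : E → ℕ, β = ∑ α ∈ Δ, (c α : ℝ) • α) ∨
      (∃ c : E → ℕ, β = -(∑ α ∈ Δ, (c α : ℝ) • α))

open Classical in
/-- The positive roots `Φ⁺` of `Φ` with respect to the base `Δ`. -/
noncomputable def posRoots (Φ Δ : Finset E) : Finset E :=
  Φ.filter fun β => ∃ c : E → ℕ, β = ∑ α ∈ Δ, (c α : ℝ) • α

/-- `ρ`, one-half the sum of the positive roots. -/
noncomputable def rho (Φ Δ : Finset E) : E := (2⁻¹ : ℝ) • ∑ β ∈ posRoots Φ Δ, β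

/-- The Weyl group of `Φ`, the subgroup of `GL(E)` generated by the reflections
`s_α : x ↦ x − ⟨x,α∨⟩α` in the roots `α ∈ Φ`.  Applied to a subset `J` of the
simple roots it yields the parabolic subgroup `W_J`. -/
def Weyl (Φ : Finset E) : Subgroup (E ≃ₗ[ℝ] E) :=
  Subgroup.closure { w : E ≃ₗ[ℝ] E | ∃ α ∈ Φ, ∀ x, w x = x - pair x α • α }

/-- The dot action `w·λ = w(λ+ρ) − ρ`. -/
noncomputable def dotAct (Φ Δ : Finset E) (w : E ≃ₗ[ℝ] E) (lam : E) : E :=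
  w (lam + rho Φ Δ) - rho Φ Δ

/-- The weight lattice `X = {λ ∈ E : ⟨λ,α∨⟩ ∈ ℤ for all α ∈ Φ}`. -/
def weightLattice (Φ : Finset E) : Set E :=
  { lam | ∀ α ∈ Φ, ∃ n : ℤ, pair lam α = (n : ℝ) }

/-- The root lattice `ℤΦ`. -/
def rootLattice (Φ : Finset E) : AddSubgroup E := AddSubgroup.closure (Φ : Set E)

/-- The bottom `p`-alcove `C_ℤ = {λ ∈ X : 0 < ⟨λ+ρ,β∨⟩ < p for all β ∈ Φ⁺}`. -/
def bottomAlcove (Φ Δ : Finset E) (p : ℕ) : Set E :=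
  { lam ∈ weightLattice Φ | ∀ β ∈ posRoots Φ Δ,
      0 < pair (lam + rho Φ Δ) β ∧ pair (lam + rho Φ Δ) β < (p : ℝ) }

/-- The closure `C̄_ℤ = {λ ∈ X : 0 ≤ ⟨λ+ρ,β∨⟩ ≤ p for all β ∈ Φ⁺}` of the
bottom `p`-alcove. -/
def closedAlcove (Φ Δ : Finset E) (p : ℕ) : Set E :=
  { lam ∈ weightLattice Φ | ∀ β ∈ posRoots Φ Δ,
      0 ≤ pair (lam + rho Φ Δ) β ∧ pair (lam + rho Φ Δ) β ≤ (p : ℝ) }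

/-- Membership in `X⁺`, the set of dominant weights. -/
def isDominant (Φ Δ : Finset E) (lam : E) : Prop :=
  lam ∈ weightLattice Φ ∧ ∀ α ∈ Δ, 0 ≤ pair lam α

/-- `a₀` is the highest short root of `Φ`: a root of minimal length such that
every root of the same length is `≤ a₀` (their difference is a nonnegative
integral combination of simple roots). -/
structure IsHighestShortRoot (Φ Δ : Finset E) (a₀ : E) : Prop where
  mem : a₀ ∈ Φ
  short : ∀ β ∈ Φ, ⟪a₀, a₀⟫ ≤ ⟪β, β⟫
  highest : ∀ β ∈ Φ, ⟪β, β⟫ = ⟪a₀, a₀⟫ →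
      ∃ c : E → ℕ, a₀ - β = ∑ α ∈ Δ, (c α : ℝ) • α

/-! ### Reflections -/

lemma pair_mul_inner_self (x a : E) : pair x a * ⟪a, a⟫ = 2 * ⟪x, a⟫ := by
  rcases eq_or_ne a 0 with rfl | ha
  · simp
  · exact div_mul_cancel₀ _ (inner_self_ne_zero.mpr ha)

lemma pair_self {a : E} (ha : a ≠ 0) : pair a a = 2 :=
  mul_div_cancel_right₀ _ (inner_self_ne_zero.mpr ha)

lemma pair_add (x y a : E) : pair (x + y) a = pair x a + pair y a := by
  simp only [pair, inner_add_left]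
  ring

lemma pair_sub (x y a : E) : pair (x - y) a = pair x a - pair y a := by
  simp only [pair, inner_sub_left]
  ring

lemma pair_smul (t : ℝ) (x a : E) : pair (t • x) a = t * pair x a := by
  simp only [pair, real_inner_smul_left]
  ring

lemma pair_neg_right (x a : E) : pair x (-a) = -pair x a := by
  simp only [pair, inner_neg_right, inner_neg_left, neg_neg]
  ring

lemma pair_map_map {w : E ≃ₗ[ℝ] E} (hw : ∀ x y, ⟪w x, w y⟫ = ⟪x, y⟫) (x a : E) :
    pair (w x) (w a) = pair x a := by
  simp only [pair, hw]

lemma pair_pos_iff {x a : E} (ha : a ≠ 0) : 0 < pair x a ↔ 0 < ⟪x, a⟫ := by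
  rw [pair, div_pos_iff_of_pos_right (real_inner_self_pos.mpr ha)]
  exact mul_pos_iff_of_pos_left two_pos

/-- The reflection in the hyperplane orthogonal to `a`, as an element of `GL(E)`; it is the
identity when `a = 0`. -/
noncomputable def refl (a : E) : E ≃ₗ[ℝ] E := (ℝ ∙ a)ᗮ.reflection.toLinearEquiv

lemma refl_apply (a x : E) : refl a x = x - pair x a • a := by
  change (ℝ ∙ a)ᗮ.reflection x = _
  rw [Submodule.reflection_orthogonal_apply, Submodule.reflection_singleton_apply, pair,
    real_inner_comm x a, real_inner_self_eq_norm_sq a, mul_div_assoc, mul_smul, neg_sub]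
  norm_cast

lemma refl_refl (a x : E) : refl a (refl a x) = x :=
  Submodule.reflection_reflection _ x

lemma refl_mul_self (a : E) : refl a * refl a = 1 :=
  LinearEquiv.ext (refl_refl a)

lemma refl_inv (a : E) : (refl a)⁻¹ = refl a :=
  inv_eq_of_mul_eq_one_left (refl_mul_self a)

lemma inner_refl_refl (a x y : E) : ⟪refl a x, refl a y⟫ = ⟪x, y⟫ :=
  (ℝ ∙ a)ᗮ.reflection.inner_map_map x y

lemma refl_self (a : E) : refl a a = -a :=
  Submodule.reflection_orthogonalComplement_singleton_eq_neg a

lemma refl_neg (a : E) : refl (-a) = refl a := by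
  ext x
  simp [refl_apply, pair_neg_right]

lemma mul_refl {w : E ≃ₗ[ℝ] E} (hw : ∀ x y, ⟪w x, w y⟫ = ⟪x, y⟫) (a : E) :
    w * refl a = refl (w a) * w := by
  ext x
  simp only [LinearEquiv.mul_apply, refl_apply, map_sub, map_smul, pair_map_map hw]

/-! ### The Weyl group -/

section Weyl

variable {S : Finset E} {w : E ≃ₗ[ℝ] E}

lemma weyl_eq_closure_image_refl (S : Finset E) : Weyl S = Subgroup.closure (refl '' S) :=
  congrArg Subgroup.closure <| Set.ext fun _ => exists_congr fun a => and_congr_right fun _ =>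
    ⟨fun h => LinearEquiv.ext fun x => (refl_apply a x).trans (h x).symm,
      fun h x => h ▸ refl_apply a x⟩

lemma refl_mem_weyl {a : E} (ha : a ∈ S) : refl a ∈ Weyl S :=
  Subgroup.subset_closure ⟨a, ha, refl_apply a⟩

lemma mem_weyl_iff_exists_list :
    w ∈ Weyl S ↔ ∃ l : List E, (∀ a ∈ l, a ∈ S) ∧ (l.map refl).prod = w := by
  constructor
  · intro hw
    rw [weyl_eq_closure_image_refl] at hw
    induction hw using Subgroup.closure_induction_left with
    | one => exact ⟨[], by simp⟩
    | mul_left _ hr _ _ ih =>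
      obtain ⟨⟨a, ha, rfl⟩, l, hl, rfl⟩ := hr, ih
      exact ⟨a :: l, List.forall_mem_cons.mpr ⟨ha, hl⟩, by simp⟩
    | inv_mul_cancel _ hr _ _ ih =>
      obtain ⟨⟨a, ha, rfl⟩, l, hl, rfl⟩ := hr, ih
      exact ⟨a :: l, List.forall_mem_cons.mpr ⟨ha, hl⟩, by simp [refl_inv]⟩
  · rintro ⟨l, hl, rfl⟩
    exact list_prod_mem (List.forall_mem_map.mpr fun a ha => refl_mem_weyl (hl a ha))

@[elab_as_elim]
lemma weyl_induction {P : (w : E ≃ₗ[ℝ] E) → w ∈ Weyl S → Prop} (one : P 1 (one_mem _))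
    (refl_mul : ∀ a (ha : a ∈ S) w (hw : w ∈ Weyl S), P w hw →
      P (refl a * w) (mul_mem (refl_mem_weyl ha) hw))
    (hw : w ∈ Weyl S) : P w hw := by
  obtain ⟨l, hl, rfl⟩ := mem_weyl_iff_exists_list.mp hw
  induction l with
  | nil => exact one
  | cons a l ih =>
    obtain ⟨ha, hl⟩ := List.forall_mem_cons.mp hl
    exact refl_mul a ha _ _ (ih hl (mem_weyl_iff_exists_list.mpr ⟨l, hl, rfl⟩))

lemma inner_map_map_of_mem_weyl (hw : w ∈ Weyl S) : ∀ x y, ⟪w x, w y⟫ = ⟪x, y⟫ := by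
  induction hw using weyl_induction with
  | one => exact fun _ _ => rfl
  | refl_mul a _ w _ ih => exact fun x y => (inner_refl_refl a (w x) (w y)).trans (ih x y)

end Weyl

variable {Φ Δ : Finset E} {w : E ≃ₗ[ℝ] E}

namespace IsRootSystem

lemma refl_mem (hΦ : IsRootSystem Φ) {a β : E} (ha : a ∈ Φ) (hβ : β ∈ Φ) : refl a β ∈ Φ := by
  rw [refl_apply]
  exact hΦ.reflect_mem a ha β hβ

lemma neg_mem (hΦ : IsRootSystem Φ) {β : E} (hβ : β ∈ Φ) : -β ∈ Φ :=
  refl_self β ▸ hΦ.refl_mem hβ hβ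

lemma map_mem_of_mem_weyl (hΦ : IsRootSystem Φ) (hw : w ∈ Weyl Φ) {β : E} (hβ : β ∈ Φ) :
    w β ∈ Φ := by
  induction hw using weyl_induction with
  | one => exact hβ
  | refl_mul a ha w _ ih => exact hΦ.refl_mem ha ih

lemma sum_comp_of_mem_weyl (hΦ : IsRootSystem Φ) (hw : w ∈ Weyl Φ) {M : Type*} [AddCommMonoid M]
    (g : E → M) : ∑ β ∈ Φ, g (w β) = ∑ β ∈ Φ, g β :=
  Finset.sum_nbij' w (w⁻¹ : E ≃ₗ[ℝ] E) (fun _ => hΦ.map_mem_of_mem_weyl hw)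
    (fun _ => hΦ.map_mem_of_mem_weyl (inv_mem hw)) (fun β _ => w.symm_apply_apply β)
    (fun β _ => w.apply_symm_apply β) (fun _ _ => rfl)

end IsRootSystem

/-! ### Positive roots -/

lemma mem_posRoots_iff {β : E} :
    β ∈ posRoots Φ Δ ↔ β ∈ Φ ∧ ∃ c : E → ℕ, β = ∑ α ∈ Δ, (c α : ℝ) • α := by
  simp only [posRoots, Finset.mem_filter]

lemma mem_of_mem_posRoots {β : E} (hβ : β ∈ posRoots Φ Δ) : β ∈ Φ :=
  (mem_posRoots_iff.mp hβ).1

lemma map_sum_natCast_smul_nonneg {f : E →ₗ[ℝ] ℝ} (hf : ∀ a ∈ Δ, 0 ≤ f a) (c : E → ℕ) :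
    0 ≤ f (∑ a ∈ Δ, (c a : ℝ) • a) := by
  simp only [map_sum, map_smul, smul_eq_mul]
  exact Finset.sum_nonneg fun a ha => mul_nonneg (Nat.cast_nonneg _) (hf a ha)

lemma map_nonneg_of_mem_posRoots {f : E →ₗ[ℝ] ℝ} (hf : ∀ a ∈ Δ, 0 ≤ f a) {β : E}
    (hβ : β ∈ posRoots Φ Δ) : 0 ≤ f β := by
  obtain ⟨-, c, rfl⟩ := mem_posRoots_iff.mp hβ
  exact map_sum_natCast_smul_nonneg hf c

lemma exists_mem_base_map_pos {f : E →ₗ[ℝ] ℝ} {β : E} (hβ : β ∈ posRoots Φ Δ) (hfβ : 0 < f β) :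
    ∃ a ∈ Δ, 0 < f a := by
  by_contra! hf
  have hneg := map_nonneg_of_mem_posRoots (f := -f) (fun a ha => neg_nonneg.mpr (hf a ha)) hβ
  exact hfβ.not_ge (neg_nonneg.mp hneg)

lemma IsRootSystem.map_pos_of_mem_posRoots (hΦ : IsRootSystem Φ) {f : E →ₗ[ℝ] ℝ}
    (hf : ∀ a ∈ Δ, 0 < f a) {β : E} (hβ : β ∈ posRoots Φ Δ) : 0 < f β := by
  obtain ⟨hβΦ, c, rfl⟩ := mem_posRoots_iff.mp hβ
  obtain ⟨a, ha, hca⟩ := Finset.exists_ne_zero_of_sum_ne_zero (hΦ.ne_zero _ hβΦ)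
  have hca_pos : (0 : ℝ) < c a := by
    refine Nat.cast_pos.mpr (Nat.pos_of_ne_zero fun h0 => hca ?_)
    rw [h0, Nat.cast_zero, zero_smul]
  simp only [map_sum, map_smul, smul_eq_mul]
  exact Finset.sum_pos' (fun b hb => mul_nonneg (Nat.cast_nonneg _) (hf b hb).le)
    ⟨a, ha, mul_pos hca_pos (hf a ha)⟩

namespace IsBase

lemma exists_linearMap_apply_eq (hΔ : IsBase Φ Δ) (g : E → ℝ) :
    ∃ f : E →ₗ[ℝ] ℝ, ∀ a ∈ Δ, f a = g a := by
  let b := Module.Basis.span hΔ.indep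
  obtain ⟨f, hf⟩ := (b.constr ℝ fun a => g a).exists_extend
  refine ⟨f, fun a ha => ?_⟩
  have hba : (b ⟨a, ha⟩ : E) = a :=
    congrArg Subtype.val (Module.Basis.span_apply hΔ.indep ⟨a, ha⟩)
  calc f a = (f ∘ₗ Submodule.subtype _) (b ⟨a, ha⟩) := by rw [LinearMap.comp_apply,
        Submodule.subtype_apply, hba]
    _ = g a := by rw [hf, b.constr_basis]

lemma mem_posRoots (hΔ : IsBase Φ Δ) {a : E} (ha : a ∈ Δ) : a ∈ posRoots Φ Δ := by
  classical
  refine mem_posRoots_iff.mpr ⟨hΔ.subset ha, fun b => if b = a then 1 else 0, ?_⟩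
  simp [ha]

lemma neg_mem_posRoots (hΔ : IsBase Φ Δ) (hΦ : IsRootSystem Φ) {β : E} (hβ : β ∈ Φ)
    (hneg : β ∉ posRoots Φ Δ) : -β ∈ posRoots Φ Δ := by
  rcases hΔ.root_decomp β hβ with hpos | ⟨c, hc⟩
  · exact absurd (mem_posRoots_iff.mpr ⟨hβ, hpos⟩) hneg
  · exact mem_posRoots_iff.mpr ⟨hΦ.neg_mem hβ, c, neg_eq_iff_eq_neg.mpr hc⟩

lemma neg_notMem_posRoots (hΔ : IsBase Φ Δ) (hΦ : IsRootSystem Φ) {β : E}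
    (hβ : β ∈ posRoots Φ Δ) : -β ∉ posRoots Φ Δ := by
  intro hneg
  obtain ⟨height, hheight⟩ := hΔ.exists_linearMap_apply_eq fun _ => 1
  have hpos : ∀ a ∈ Δ, 0 < height a := fun a ha => hheight a ha ▸ one_pos
  have h₁ := hΦ.map_pos_of_mem_posRoots hpos hβ
  have h₂ := hΦ.map_pos_of_mem_posRoots hpos hneg
  rw [map_neg] at h₂
  linarith

/-- The witness is the functional that vanishes at `a` and is `1` at the other simple roots. -/
lemma exists_linearMap_pos_of_ne (hΔ : IsBase Φ Δ) (hΦ : IsRootSystem Φ) {a γ : E} (ha : a ∈ Δ)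
    (hγ : γ ∈ posRoots Φ Δ) (hne : γ ≠ a) :
    ∃ f : E →ₗ[ℝ] ℝ, f a = 0 ∧ (∀ b ∈ Δ, 0 ≤ f b) ∧ 0 < f γ := by
  classical
  obtain ⟨f, hf⟩ := hΔ.exists_linearMap_apply_eq fun b => if b = a then 0 else 1
  have hf_nonneg : ∀ b ∈ Δ, 0 ≤ f b := fun b hb => by
    rw [hf b hb]
    split_ifs <;> norm_num
  refine ⟨f, by simp [hf a ha], hf_nonneg, ?_⟩
  refine (map_nonneg_of_mem_posRoots hf_nonneg hγ).lt_of_ne fun hfγ => hne ?_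
  obtain ⟨hγΦ, c, hc⟩ := mem_posRoots_iff.mp hγ
  have hc_zero : ∀ b ∈ Δ, b ≠ a → c b = 0 := by
    have hsum : ∑ b ∈ Δ, (c b : ℝ) * f b = 0 := by
      rw [hfγ, hc]
      simp only [map_sum, map_smul, smul_eq_mul]
    intro b hb hba
    have hterm := (Finset.sum_eq_zero_iff_of_nonneg fun b hb =>
      mul_nonneg (Nat.cast_nonneg _) (hf_nonneg b hb)).mp hsum b hb
    simpa [hf b hb, hba] using hterm
  have hγa : γ = (c a : ℝ) • a := by
    rw [hc]
    exact Finset.sum_eq_single_of_mem a ha fun b hb hba => by simp [hc_zero b hb hba]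
  rcases hΦ.reduced a (hΔ.subset ha) (c a) (hγa ▸ hγΦ) with h1 | h1
  · rw [hγa, h1, one_smul]
  · linarith [(c a).cast_nonneg (α := ℝ)]

lemma refl_mem_posRoots (hΔ : IsBase Φ Δ) (hΦ : IsRootSystem Φ) {a γ : E} (ha : a ∈ Δ)
    (hγ : γ ∈ posRoots Φ Δ) (hne : γ ≠ a) : refl a γ ∈ posRoots Φ Δ := by
  by_contra hcon
  obtain ⟨f, hfa, hf_nonneg, hfγ⟩ := hΔ.exists_linearMap_pos_of_ne hΦ ha hγ hne
  have hneg := hΔ.neg_mem_posRoots hΦ (hΦ.refl_mem (hΔ.subset ha) (mem_of_mem_posRoots hγ)) hcon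
  have hle := map_nonneg_of_mem_posRoots hf_nonneg hneg
  rw [refl_apply, map_neg, map_sub, map_smul, hfa, smul_zero, sub_zero] at hle
  linarith

lemma sum_roots_of_even (hΔ : IsBase Φ Δ) (hΦ : IsRootSystem Φ) {g : E → ℝ}
    (hg : ∀ x, g (-x) = g x) : ∑ β ∈ Φ, g β = 2 * ∑ β ∈ posRoots Φ Δ, g β := by
  classical
  have hneg : ∑ β ∈ Φ \ posRoots Φ Δ, g β = ∑ β ∈ posRoots Φ Δ, g β := by
    refine Finset.sum_nbij' Neg.neg Neg.neg (fun β hβ => ?_) (fun β hβ => ?_)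
      (fun β _ => neg_neg β) (fun β _ => neg_neg β) (fun β _ => (hg β).symm)
    · obtain ⟨hβΦ, hβ_neg⟩ := Finset.mem_sdiff.mp hβ
      exact hΔ.neg_mem_posRoots hΦ hβΦ hβ_neg
    · exact Finset.mem_sdiff.mpr
        ⟨hΦ.neg_mem (mem_of_mem_posRoots hβ), hΔ.neg_notMem_posRoots hΦ hβ⟩
  rw [← Finset.sum_sdiff (show posRoots Φ Δ ⊆ Φ from fun _ => mem_of_mem_posRoots), hneg, two_mul]

end IsBase

/-! ### The half sum of the positive roots -/

lemma inner_rho (x : E) : 2 * ⟪x, rho Φ Δ⟫ = ∑ β ∈ posRoots Φ Δ, ⟪x, β⟫ := by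
  rw [rho, real_inner_smul_right, inner_sum, mul_inv_cancel_left₀ two_ne_zero]

namespace IsBase

lemma refl_rho (hΔ : IsBase Φ Δ) (hΦ : IsRootSystem Φ) {a : E} (ha : a ∈ Δ) :
    refl a (rho Φ Δ) = rho Φ Δ - a := by
  classical
  have hmaps : ∀ β ∈ (posRoots Φ Δ).erase a, refl a β ∈ (posRoots Φ Δ).erase a := by
    intro β hβ
    obtain ⟨hne, hβ⟩ := Finset.mem_erase.mp hβ
    refine Finset.mem_erase.mpr ⟨fun h => ?_, hΔ.refl_mem_posRoots hΦ ha hβ hne⟩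
    have hβa : β = -a := by rw [← refl_refl a β, h, refl_self]
    exact hΔ.neg_notMem_posRoots hΦ (hΔ.mem_posRoots ha) (hβa ▸ hβ)
  have hsum : ∑ β ∈ (posRoots Φ Δ).erase a, refl a β = ∑ β ∈ (posRoots Φ Δ).erase a, β :=
    Finset.sum_nbij' (refl a) (refl a) hmaps hmaps (fun β _ => refl_refl a β)
      (fun β _ => refl_refl a β) (fun _ _ => rfl)
  rw [rho, ← Finset.add_sum_erase _ _ (hΔ.mem_posRoots ha), map_smul, map_add, map_sum, hsum,
    refl_self]
  module

lemma inner_rho_pos_of_mem_base (hΔ : IsBase Φ Δ) (hΦ : IsRootSystem Φ) {a : E} (ha : a ∈ Δ) :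
    0 < ⟪rho Φ Δ, a⟫ := by
  have ha0 : a ≠ 0 := hΦ.ne_zero a (hΔ.subset ha)
  have hrefl := hΔ.refl_rho hΦ ha
  rw [refl_apply, sub_right_inj] at hrefl
  have hpair : pair (rho Φ Δ) a = 1 :=
    smul_left_injective ℝ ha0 (hrefl.trans (one_smul ℝ a).symm)
  exact (pair_pos_iff ha0).mp (hpair ▸ one_pos)

lemma inner_rho_pos (hΔ : IsBase Φ Δ) (hΦ : IsRootSystem Φ) {β : E} (hβ : β ∈ posRoots Φ Δ) :
    0 < ⟪rho Φ Δ, β⟫ :=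
  hΦ.map_pos_of_mem_posRoots (f := innerₛₗ ℝ (rho Φ Δ))
    (fun _ ha => hΔ.inner_rho_pos_of_mem_base hΦ ha) hβ

lemma four_mul_inner_map_rho_le (hΔ : IsBase Φ Δ) (hΦ : IsRootSystem Φ) (hw : w ∈ Weyl Φ)
    (x : E) : 4 * ⟪x, w (rho Φ Δ)⟫ ≤ ∑ β ∈ Φ, |⟪x, β⟫| := by
  have hrho : 2 * ⟪x, w (rho Φ Δ)⟫ = ∑ β ∈ posRoots Φ Δ, ⟪x, w β⟫ := by
    simp only [rho, map_smul, map_sum, real_inner_smul_right, inner_sum]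
    ring
  calc 4 * ⟪x, w (rho Φ Δ)⟫ = 2 * ∑ β ∈ posRoots Φ Δ, ⟪x, w β⟫ := by rw [← hrho]; ring
    _ ≤ 2 * ∑ β ∈ posRoots Φ Δ, |⟪x, w β⟫| := by gcongr; exact le_abs_self _
    _ = ∑ β ∈ Φ, |⟪x, w β⟫| :=
      (hΔ.sum_roots_of_even hΦ fun β => by rw [map_neg, inner_neg_right, abs_neg]).symm
    _ = ∑ β ∈ Φ, |⟪x, β⟫| := hΦ.sum_comp_of_mem_weyl hw fun β => |⟪x, β⟫|

/-! ### Freeness of the Weyl group action on `ρ` -/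

lemma exists_refl_inner_rho_lt (hΔ : IsBase Φ Δ) (hΦ : IsRootSystem Φ) {γ : E}
    (hγ : γ ∈ posRoots Φ Δ) : ∃ a ∈ Δ, ⟪rho Φ Δ, refl a γ⟫ < ⟪rho Φ Δ, γ⟫ := by
  have hγ0 : γ ≠ 0 := hΦ.ne_zero γ (mem_of_mem_posRoots hγ)
  obtain ⟨a, ha, hγa⟩ : ∃ a ∈ Δ, 0 < ⟪γ, a⟫ :=
    exists_mem_base_map_pos (f := innerₛₗ ℝ γ) hγ (real_inner_self_pos.mpr hγ0)
  refine ⟨a, ha, ?_⟩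
  rw [refl_apply, inner_sub_right, real_inner_smul_right, sub_lt_self_iff]
  exact mul_pos ((pair_pos_iff (hΦ.ne_zero a (hΔ.subset ha))).mpr hγa)
    (hΔ.inner_rho_pos_of_mem_base hΦ ha)

/-- Descent on `(ρ, γ)`: if `s_a` lowers `γ`, then `s_γ = s_a s_{s_a γ} s_a`. -/
lemma refl_mem_weyl_base (hΔ : IsBase Φ Δ) (hΦ : IsRootSystem Φ) {γ : E}
    (hγ : γ ∈ posRoots Φ Δ) : refl γ ∈ Weyl Δ := by
  classical
  by_contra hcon
  obtain ⟨δ, hδ, hmin⟩ := Finset.exists_min_image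
    ((posRoots Φ Δ).filter fun x => refl x ∉ Weyl Δ) (fun x => ⟪rho Φ Δ, x⟫)
    ⟨γ, Finset.mem_filter.mpr ⟨hγ, hcon⟩⟩
  obtain ⟨hδ_pos, hδ_notMem⟩ := Finset.mem_filter.mp hδ
  obtain ⟨a, ha, hlt⟩ := hΔ.exists_refl_inner_rho_lt hΦ hδ_pos
  have ha_mem : refl a ∈ Weyl Δ := refl_mem_weyl ha
  have hne : δ ≠ a := fun h => hδ_notMem (h ▸ ha_mem)
  have hlower : refl (refl a δ) ∈ Weyl Δ := by
    by_contra hno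
    exact (hmin _ (Finset.mem_filter.mpr
      ⟨hΔ.refl_mem_posRoots hΦ ha hδ_pos hne, hno⟩)).not_gt hlt
  have hconj : refl δ = refl a * (refl (refl a δ) * refl a) := by
    rw [← mul_refl (inner_refl_refl a) δ, ← mul_assoc, refl_mul_self, one_mul]
  exact hδ_notMem (hconj ▸ mul_mem ha_mem (mul_mem hlower ha_mem))

lemma weyl_le_weyl_base (hΔ : IsBase Φ Δ) (hΦ : IsRootSystem Φ) : Weyl Φ ≤ Weyl Δ := by
  rw [weyl_eq_closure_image_refl Φ, Subgroup.closure_le]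
  rintro _ ⟨β, hβ, rfl⟩
  by_cases hpos : β ∈ posRoots Φ Δ
  · exact hΔ.refl_mem_weyl_base hΦ hpos
  · rw [← refl_neg]
    exact hΔ.refl_mem_weyl_base hΦ (hΔ.neg_mem_posRoots hΦ hβ hpos)

/-- The exchange property. -/
lemma exists_shorter_list_of_notMem_posRoots (hΔ : IsBase Φ Δ) (hΦ : IsRootSystem Φ) {a : E}
    (ha : a ∈ Δ) {l : List E} (hl : ∀ b ∈ l, b ∈ Δ)
    (hneg : (l.map refl).prod a ∉ posRoots Φ Δ) :
    ∃ l' : List E, l'.length < l.length ∧ (∀ b ∈ l', b ∈ Δ) ∧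
      (l'.map refl).prod = (l.map refl).prod * refl a := by
  induction l with
  | nil => exact absurd (hΔ.mem_posRoots ha) hneg
  | cons b l ih =>
    obtain ⟨hb, hl⟩ := List.forall_mem_cons.mp hl
    simp only [List.map_cons, List.prod_cons, mul_assoc] at hneg ⊢
    set u := (l.map refl).prod
    by_cases hua : u a ∈ posRoots Φ Δ
    · have hua_eq : u a = b := by
        by_contra hne
        exact hneg (hΔ.refl_mem_posRoots hΦ hb hua hne)
      have hu_mem : u ∈ Weyl Δ := mem_weyl_iff_exists_list.mpr ⟨l, hl, rfl⟩
      refine ⟨l, by simp, hl, ?_⟩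
      rw [mul_refl (inner_map_map_of_mem_weyl hu_mem), hua_eq, ← mul_assoc, refl_mul_self,
        one_mul]
    · obtain ⟨l', hlen, hl', hprod⟩ := ih hl hua
      refine ⟨b :: l', by simpa using hlen, List.forall_mem_cons.mpr ⟨hb, hl'⟩, ?_⟩
      rw [List.map_cons, List.prod_cons, hprod]

lemma prod_map_refl_eq_one (hΔ : IsBase Φ Δ) (hΦ : IsRootSystem Φ) (l : List E)
    (hl : ∀ b ∈ l, b ∈ Δ) (hpos : ∀ a ∈ Δ, (l.map refl).prod a ∈ posRoots Φ Δ) :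
    (l.map refl).prod = 1 := by
  rcases l.eq_nil_or_concat with rfl | ⟨u, a, rfl⟩
  · simp
  · simp only [List.concat_eq_append] at hl hpos ⊢
    have ha : a ∈ Δ := hl a (by simp)
    have hprod : ((u ++ [a]).map refl).prod = (u.map refl).prod * refl a := by simp
    have hua : (u.map refl).prod a ∉ posRoots Φ Δ := by
      have hpos_a := hpos a ha
      rw [hprod, LinearEquiv.mul_apply, refl_self, map_neg] at hpos_a
      exact neg_neg ((u.map refl).prod a) ▸ hΔ.neg_notMem_posRoots hΦ hpos_a
    obtain ⟨l', hlen, hl', hprod'⟩ :=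
      hΔ.exists_shorter_list_of_notMem_posRoots hΦ ha (fun b hb => hl b (by simp [hb])) hua
    rw [hprod, ← hprod'] at hpos ⊢
    exact prod_map_refl_eq_one hΔ hΦ l' hl' hpos
termination_by l.length
decreasing_by simp_all; omega

lemma eq_one_of_map_rho_eq (hΔ : IsBase Φ Δ) (hΦ : IsRootSystem Φ) (hw : w ∈ Weyl Φ)
    (hρ : w (rho Φ Δ) = rho Φ Δ) : w = 1 := by
  obtain ⟨l, hl, rfl⟩ := mem_weyl_iff_exists_list.mp (hΔ.weyl_le_weyl_base hΦ hw)
  refine hΔ.prod_map_refl_eq_one hΦ l hl fun a ha => ?_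
  by_contra hcon
  have hneg := hΔ.inner_rho_pos hΦ <|
    hΔ.neg_mem_posRoots hΦ (hΦ.map_mem_of_mem_weyl hw (hΔ.subset ha)) hcon
  rw [← hρ, ← map_neg, inner_map_map_of_mem_weyl hw, inner_neg_right] at hneg
  linarith [hΔ.inner_rho_pos_of_mem_base hΦ ha]

end IsBase

/-! ### The invariant quadratic form -/

/-- The operator `x ↦ ∑ ⟨x, β∨⟩ β`, the sum being over all roots.  Its quadratic form is the
canonical Weyl-invariant one, `x ↦ ∑ ⟨x, β∨⟩ (x, β)`. -/
noncomputable def rootOperator (Φ : Finset E) : E →ₗ[ℝ] E where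
  toFun x := ∑ β ∈ Φ, pair x β • β
  map_add' x y := by simp only [pair_add, add_smul, Finset.sum_add_distrib]
  map_smul' t x := by simp only [pair_smul, mul_smul, Finset.smul_sum, RingHom.id_apply]

lemma rootOperator_apply (x : E) : rootOperator Φ x = ∑ β ∈ Φ, pair x β • β := rfl

lemma inner_rootOperator (x y : E) : ⟪rootOperator Φ x, y⟫ = ∑ β ∈ Φ, pair x β * ⟪y, β⟫ := by
  rw [rootOperator_apply, sum_inner]
  refine Finset.sum_congr rfl fun β _ => ?_
  rw [real_inner_smul_left, real_inner_comm]

lemma rootOperator_isSymmetric (Φ : Finset E) : (rootOperator Φ).IsSymmetric := by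
  intro x y
  rw [inner_rootOperator, real_inner_comm, inner_rootOperator]
  refine Finset.sum_congr rfl fun β _ => ?_
  simp only [pair]
  ring

namespace IsRootSystem

lemma rootOperator_map_of_mem_weyl (hΦ : IsRootSystem Φ) (hw : w ∈ Weyl Φ) (x : E) :
    rootOperator Φ (w x) = w (rootOperator Φ x) := by
  simp only [rootOperator_apply, map_sum, map_smul]
  rw [← hΦ.sum_comp_of_mem_weyl hw]
  simp only [pair_map_map (inner_map_map_of_mem_weyl hw)]

/-- The reflection in `a` negates `rootOperator Φ a`, and its `-1`-eigenspace is `ℝ a`. -/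
lemma exists_rootOperator_apply_root (hΦ : IsRootSystem Φ) {a : E} (ha : a ∈ Φ) :
    ∃ c : ℝ, rootOperator Φ a = c • a := by
  have hneg := hΦ.rootOperator_map_of_mem_weyl (refl_mem_weyl ha) a
  rw [refl_self, map_neg, refl_apply] at hneg
  refine ⟨2⁻¹ * pair (rootOperator Φ a) a, ?_⟩
  linear_combination (norm := module) (-2⁻¹ : ℝ) • hneg

lemma apply_eq_apply_of_inner_ne_zero (hΦ : IsRootSystem Φ) {ι : Type*} {e : E → ι}
    (he : ∀ a ∈ Φ, ∀ b ∈ Φ, ⟪a, b⟫ ≠ 0 → e a = e b) {a b : E} (ha : a ∈ Φ) (hb : b ∈ Φ) :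
    e a = e b := by
  by_contra hne
  refine hΦ.irred {x | x ∈ Φ ∧ e a = e x} {x | x ∈ Φ ∧ e a ≠ e x} ?_ ⟨a, ha, rfl⟩ ⟨b, hb, hne⟩ ?_
  · ext x
    simp only [Set.mem_union, Set.mem_ofPred_eq, Finset.mem_coe]
    tauto
  · rintro x ⟨hx, hax⟩ y ⟨hy, hay⟩
    by_contra hxy
    exact hay (hax.trans (he x hx y hy hxy))

lemma exists_rootOperator_eq_smul_id (hΦ : IsRootSystem Φ) :
    ∃ c : ℝ, rootOperator Φ = c • LinearMap.id := by
  have heigen : ∀ a : E, ∃ c : ℝ, a ∈ Φ → rootOperator Φ a = c • a := fun a => by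
    by_cases ha : a ∈ Φ
    · exact (hΦ.exists_rootOperator_apply_root ha).imp fun _ hc _ => hc
    · exact ⟨0, fun h => absurd h ha⟩
  choose e he using heigen
  have hconst : ∀ a ∈ Φ, ∀ b ∈ Φ, ⟪a, b⟫ ≠ 0 → e a = e b := fun a ha b hb hab => by
    have hsymm := rootOperator_isSymmetric Φ a b
    rw [he a ha, he b hb, real_inner_smul_left, real_inner_smul_right] at hsymm
    exact mul_right_cancel₀ hab hsymm
  obtain ⟨a, ha⟩ := hΦ.nonempty
  refine ⟨e a, LinearMap.ext_on hΦ.span_top fun b hb => ?_⟩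
  rw [hΦ.apply_eq_apply_of_inner_ne_zero hconst ha hb]
  exact he b hb

lemma pair_le_one_of_short (hΦ : IsRootSystem Φ) {a β : E} (ha : a ∈ Φ) (hβ : β ∈ Φ)
    (hle : ⟪a, a⟫ ≤ ⟪β, β⟫) (hne : β ≠ a) : pair a β ≤ 1 := by
  obtain ⟨n, hn⟩ := hΦ.pair_int β hβ a ha
  have hdist : 0 < ⟪a - β, a - β⟫ := real_inner_self_pos.mpr (sub_ne_zero.mpr hne.symm)
  rw [real_inner_sub_sub_self] at hdist
  have hlt : pair a β < 2 := by
    rw [pair, div_lt_iff₀ (real_inner_self_pos.mpr (hΦ.ne_zero β hβ))]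
    linarith
  rw [hn] at hlt ⊢
  exact_mod_cast Int.lt_add_one_iff.mp (by exact_mod_cast hlt)

end IsRootSystem

namespace IsHighestShortRoot

variable {a₀ : E}

/-- Otherwise `s_β a₀` would be a higher short root. -/
lemma pair_nonneg (ha₀ : IsHighestShortRoot Φ Δ a₀) (hΔ : IsBase Φ Δ) (hΦ : IsRootSystem Φ)
    {β : E} (hβ : β ∈ posRoots Φ Δ) : 0 ≤ pair a₀ β := by
  obtain ⟨c, hc⟩ := ha₀.highest (refl β a₀) (hΦ.refl_mem (mem_of_mem_posRoots hβ) ha₀.mem)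
    (inner_refl_refl β a₀ a₀)
  rw [refl_apply, sub_sub_cancel] at hc
  have hnonneg : 0 ≤ ⟪rho Φ Δ, pair a₀ β • β⟫ := hc ▸
    map_sum_natCast_smul_nonneg (f := innerₛₗ ℝ (rho Φ Δ))
      (fun _ ha => (hΔ.inner_rho_pos_of_mem_base hΦ ha).le) c
  rw [real_inner_smul_right] at hnonneg
  exact nonneg_of_mul_nonneg_left hnonneg (hΔ.inner_rho_pos hΦ hβ)

lemma mem_posRoots (ha₀ : IsHighestShortRoot Φ Δ a₀) (hΔ : IsBase Φ Δ) (hΦ : IsRootSystem Φ) :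
    a₀ ∈ posRoots Φ Δ := by
  by_contra hcon
  have hnonneg := ha₀.pair_nonneg hΔ hΦ (hΔ.neg_mem_posRoots hΦ ha₀.mem hcon)
  rw [pair_neg_right, pair_self (hΦ.ne_zero a₀ ha₀.mem)] at hnonneg
  linarith

lemma pair_mul_inner_of_ne (ha₀ : IsHighestShortRoot Φ Δ a₀) (hΔ : IsBase Φ Δ)
    (hΦ : IsRootSystem Φ) {β : E} (hβ : β ∈ posRoots Φ Δ) (hne : β ≠ a₀) :
    pair a₀ β * ⟪a₀, β⟫ = ⟪a₀, β⟫ := by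
  have hβΦ := mem_of_mem_posRoots hβ
  obtain ⟨n, hn⟩ := hΦ.pair_int β hβΦ a₀ ha₀.mem
  have h0 := ha₀.pair_nonneg hΔ hΦ hβ
  have h1 := hΦ.pair_le_one_of_short ha₀.mem hβΦ (ha₀.short β hβΦ) hne
  have hinner := pair_mul_inner_self a₀ β
  rw [hn] at h0 h1 hinner ⊢
  norm_cast at h0 h1
  obtain rfl | rfl : n = 0 ∨ n = 1 := by omega
  · push_cast at hinner ⊢
    linarith
  · push_cast
    ring

lemma sum_pair_mul_inner_self (ha₀ : IsHighestShortRoot Φ Δ a₀) (hΔ : IsBase Φ Δ)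
    (hΦ : IsRootSystem Φ) :
    ∑ β ∈ Φ, pair a₀ β * ⟪a₀, β⟫ = 2 * (pair (rho Φ Δ) a₀ + 1) * ⟪a₀, a₀⟫ := by
  classical
  have ha₀_pos := ha₀.mem_posRoots hΔ hΦ
  have hsum : ∑ β ∈ posRoots Φ Δ, pair a₀ β * ⟪a₀, β⟫ =
      ∑ β ∈ posRoots Φ Δ, ⟪a₀, β⟫ + ⟪a₀, a₀⟫ := by
    rw [← Finset.add_sum_erase _ _ ha₀_pos, ← Finset.add_sum_erase _ _ ha₀_pos,
      pair_self (hΦ.ne_zero a₀ ha₀.mem), Finset.sum_congr rfl fun β hβ =>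
        ha₀.pair_mul_inner_of_ne hΔ hΦ (Finset.mem_of_mem_erase hβ) (Finset.ne_of_mem_erase hβ)]
    ring
  rw [hΔ.sum_roots_of_even hΦ fun β => by rw [pair_neg_right, inner_neg_right, neg_mul_neg], hsum,
    ← inner_rho, real_inner_comm, ← pair_mul_inner_self]
  ring

lemma sum_pair_mul_inner (ha₀ : IsHighestShortRoot Φ Δ a₀) (hΔ : IsBase Φ Δ)
    (hΦ : IsRootSystem Φ) (x : E) :
    ∑ β ∈ Φ, pair x β * ⟪x, β⟫ = 2 * (pair (rho Φ Δ) a₀ + 1) * ⟪x, x⟫ := by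
  obtain ⟨c, hc⟩ := hΦ.exists_rootOperator_eq_smul_id
  have hform : ∀ y : E, ∑ β ∈ Φ, pair y β * ⟪y, β⟫ = c * ⟪y, y⟫ := fun y => by
    rw [← inner_rootOperator, hc, LinearMap.smul_apply, LinearMap.id_apply, real_inner_smul_left]
  have hc_eq : c = 2 * (pair (rho Φ Δ) a₀ + 1) :=
    mul_right_cancel₀ (inner_self_ne_zero.mpr (hΦ.ne_zero a₀ ha₀.mem))
      ((hform a₀).symm.trans (ha₀.sum_pair_mul_inner_self hΔ hΦ))
  rw [hform, hc_eq]

end IsHighestShortRoot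

/-! ### Weights -/

lemma sub_mem_weightLattice {x y : E} (hx : x ∈ weightLattice Φ) (hy : y ∈ weightLattice Φ) :
    x - y ∈ weightLattice Φ := by
  intro β hβ
  obtain ⟨m, hm⟩ := hx β hβ
  obtain ⟨n, hn⟩ := hy β hβ
  exact ⟨m - n, by rw [pair_sub, hm, hn, Int.cast_sub]⟩

/-- `|n| ≤ n²` for the integer `n = ⟨x, β∨⟩`. -/
lemma abs_inner_le_pair_mul_inner {x β : E} (hx : x ∈ weightLattice Φ) (hβ : β ∈ Φ) :
    |⟪x, β⟫| ≤ pair x β * ⟪x, β⟫ := by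
  obtain ⟨n, hn⟩ := hx β hβ
  have hinner : ⟪x, β⟫ = n * (⟪β, β⟫ / 2) := by
    rw [← hn]
    linear_combination (-2⁻¹ : ℝ) * pair_mul_inner_self x β
  have hsq : |(n : ℝ)| ≤ n * n := by
    exact_mod_cast (Int.le_self_sq |n|).trans_eq ((sq_abs n).trans (sq n))
  have hβ_nonneg : 0 ≤ ⟪β, β⟫ / 2 := div_nonneg real_inner_self_nonneg zero_le_two
  rw [hn, hinner, abs_mul, abs_of_nonneg hβ_nonneg, ← mul_assoc]
  exact mul_le_mul_of_nonneg_right hsq hβ_nonneg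

lemma IsHighestShortRoot.eq_zero_of_smul_eq_map_rho_sub {a₀ τ : E} {p : ℝ} {w' : E ≃ₗ[ℝ] E}
    (ha₀ : IsHighestShortRoot Φ Δ a₀) (hΔ : IsBase Φ Δ) (hΦ : IsRootSystem Φ)
    (hp : pair (rho Φ Δ) a₀ + 1 < p) (hw : w ∈ Weyl Φ) (hw' : w' ∈ Weyl Φ)
    (hτ : τ ∈ weightLattice Φ) (hpτ : p • τ = w (rho Φ Δ) - w' (rho Φ Δ)) : τ = 0 := by
  have hsum : ∑ β ∈ Φ, |⟪τ, β⟫| ≤ 2 * (pair (rho Φ Δ) a₀ + 1) * ⟪τ, τ⟫ :=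
    (Finset.sum_le_sum fun _ hβ => abs_inner_le_pair_mul_inner hτ hβ).trans_eq
      (ha₀.sum_pair_mul_inner hΔ hΦ τ)
  have hupper := hΔ.four_mul_inner_map_rho_le hΦ hw τ
  have hlower := hΔ.four_mul_inner_map_rho_le hΦ hw' (-τ)
  simp only [inner_neg_left, abs_neg] at hlower
  have hpττ : p * ⟪τ, τ⟫ = ⟪τ, w (rho Φ Δ)⟫ - ⟪τ, w' (rho Φ Δ)⟫ := by
    rw [← real_inner_smul_right, hpτ, inner_sub_right]
  have hle : p * ⟪τ, τ⟫ ≤ (pair (rho Φ Δ) a₀ + 1) * ⟪τ, τ⟫ := by linarith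
  by_contra hne
  exact hp.not_ge (le_of_mul_le_mul_right hle (real_inner_self_pos.mpr hne))

theorem statement9_general {a₀ σ σ' : E} {p : ℝ} {w' : E ≃ₗ[ℝ] E}
    (hΦ : IsRootSystem Φ) (hΔ : IsBase Φ Δ) (ha₀ : IsHighestShortRoot Φ Δ a₀)
    (hp : pair (rho Φ Δ) a₀ + 1 < p) (hw : w ∈ Weyl Φ) (hw' : w' ∈ Weyl Φ)
    (hσ : σ ∈ weightLattice Φ) (hσ' : σ' ∈ weightLattice Φ)
    (heq : dotAct Φ Δ w 0 + p • σ = dotAct Φ Δ w' 0 + p • σ') :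
    w = w' ∧ σ = σ' := by
  have hdiff : p • (σ' - σ) = w (rho Φ Δ) - w' (rho Φ Δ) := by
    simp only [dotAct, zero_add] at heq
    linear_combination (norm := module) -heq
  have hσσ' : σ' - σ = 0 :=
    ha₀.eq_zero_of_smul_eq_map_rho_sub hΔ hΦ hp hw hw' (sub_mem_weightLattice hσ' hσ) hdiff
  have hρ : w (rho Φ Δ) = w' (rho Φ Δ) := by
    rwa [hσσ', smul_zero, eq_comm, sub_eq_zero] at hdiff
  have hone : w'⁻¹ * w = 1 := by
    refine hΔ.eq_one_of_map_rho_eq hΦ (mul_mem (inv_mem hw') hw) ?_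
    rw [LinearEquiv.mul_apply, hρ]
    exact w'.symm_apply_apply _
  exact ⟨(inv_mul_eq_one.mp hone).symm, (sub_eq_zero.mp hσσ').symm⟩

/-- Let `p` be a prime with `p > h`.  Suppose
`w·0 + pσ = w'·0 + pσ'` where `w, w' ∈ W` and `σ, σ'` are dominant weights each
satisfying `(·, α₀∨) ≤ 1` (i.e. each is zero or minuscule).  Then `w = w'` and
`σ = σ'`. -/
theorem statement9
    (Φ Δ : Finset E) (hΦ : IsRootSystem Φ) (hΔ : IsBase Φ Δ)
    (a₀ : E) (ha₀ : IsHighestShortRoot Φ Δ a₀)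
    (h : ℕ) (hcox : (h : ℝ) = pair (rho Φ Δ) a₀ + 1)
    (p : ℕ) (hp : p.Prime) (hbig : h < p)
    (w w' : E ≃ₗ[ℝ] E) (hw : w ∈ Weyl Φ) (hw' : w' ∈ Weyl Φ)
    (σ σ' : E) (hσ : isDominant Φ Δ σ) (hσ' : isDominant Φ Δ σ')
    (hσm : pair σ a₀ ≤ 1) (hσ'm : pair σ' a₀ ≤ 1)
    (heq : dotAct Φ Δ w 0 + (p : ℝ) • σ = dotAct Φ Δ w' 0 + (p : ℝ) • σ') :
    w = w' ∧ σ = σ' := by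
  refine statement9_general hΦ hΔ ha₀ ?_ hw hw' hσ.1 hσ'.1 heq
  exact hcox ▸ Nat.cast_lt.mpr hbig

end PaperDNN
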